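/- Let k be a field and n a natural number. Define two (n+2)-tuples of polynomials in k[X_0,…,X_n]: a_j = X_j for 0 ≤ j ≤ n and a_{n+1} = 0; b_0 = 0 and b_j = X_{j-1} for 1 ≤ j ≤ n+1 (these are the rows of the 2×(n+2) matrix [[X_0, X_1, …, X_n, 0], [0, X_0, …, X_{n-1}, X_n]]). Then the (n+2 choose 2) minors m_{ij} = a_i·b_j − a_j·b_i, for 0 ≤ i < j ≤ n+1, form a basis of the k-vector space of homogeneous polynomials of degree 2 in the variables X_0,…,X_n (the degree-2 homogeneous component of the polynomial ring k[X_0,…,X_n]). -/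

import Mathlib

/-- First row `(X_0, X_1, …, X_n, 0)` of the `2 × (n+2)` matrix. -/
noncomputable def rowA (k : Type*) [Field k] (n : ℕ) :
    Fin (n + 2) → MvPolynomial (Fin (n + 1)) k :=
  fun j => if h : (j : ℕ) < n + 1 then MvPolynomial.X ⟨(j : ℕ), h⟩ else 0

/-- Second row `(0, X_0, …, X_{n-1}, X_n)` of the `2 × (n+2)` matrix. -/
noncomputable def rowB (k : Type*) [Field k] (n : ℕ) :
    Fin (n + 2) → MvPolynomial (Fin (n + 1)) k :=
  fun j =>
    if h : (j : ℕ) = 0 then 0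
    else MvPolynomial.X ⟨(j : ℕ) - 1, by have := j.isLt; omega⟩

/-- The `2 × 2` minor `m_{ij} = a_i·b_j − a_j·b_i` of the matrix with rows `rowA`, `rowB`,
indexed by pairs `i < j`. -/
noncomputable def minor (k : Type*) [Field k] (n : ℕ)
    (p : {p : Fin (n + 2) × Fin (n + 2) // p.1 < p.2}) : MvPolynomial (Fin (n + 1)) k :=
  rowA k n p.1.1 * rowB k n p.1.2 - rowA k n p.1.2 * rowB k n p.1.1

/-!
For an arbitrary tuple `x` in a commutative ring, the minor on the columns `i` and `j + 1` is
`x_i x_j - x_{i-1} x_{j+1}`, where `x_{-1} = x_n = 0`. These differences telescope along the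
products `x_i x_j` with `i + j` fixed, so the minors span all of these products. There are as many
minors as products with `i ≤ j`, and over a commutative ring a finite family spanning the same
submodule as a linearly independent family of the same size is itself linearly independent.
-/

open MvPolynomial Submodule

/-- The matrix with rows `(x_0, …, x_{n-1}, 0)` and `(0, x_0, …, x_{n-1})`; for the tuple of
variables these are the rows `rowA` and `rowB`. -/
def shiftMatrix {A : Type*} [Zero A] {n : ℕ} (x : Fin n → A) : Matrix (Fin 2) (Fin (n + 1)) A :=
  Matrix.of ![Fin.snoc x 0, Fin.cons 0 x]

/-- The maximal minors of `shiftMatrix x`, indexed by pairs of columns `i < j`; for the tuple of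
variables they are the polynomials `minor`. -/
def shiftMinor {A : Type*} [CommRing A] {n : ℕ} (x : Fin n → A)
    (p : {p : Fin (n + 1) × Fin (n + 1) // p.1 < p.2}) : A :=
  ((shiftMatrix x).submatrix id ![p.1.1, p.1.2]).det

/-- The bijection `(i, j) ↦ (i, j + 1)` from weakly to strictly increasing pairs. It matches the
product `x_i x_j` with the minor in which that product is the main diagonal term. -/
def lePairEquivLTPair (n : ℕ) :
    {q : Fin n × Fin n // q.1 ≤ q.2} ≃ {p : Fin (n + 1) × Fin (n + 1) // p.1 < p.2} where
  toFun q := ⟨(q.1.1.castSucc, q.1.2.succ), Fin.castSucc_lt_succ_iff.2 q.2⟩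
  invFun p := ⟨(p.1.1.castPred (Fin.ne_last_of_lt p.2), p.1.2.pred (Fin.ne_zero_of_lt p.2)),
    Fin.castSucc_lt_succ_iff.1 (by simpa using p.2)⟩
  left_inv q := by simp
  right_inv p := by simp

theorem linearIndependent_iff_of_span_range_eq {R M ι : Type*} [Semiring R] [OrzechProperty R]
    [AddCommMonoid M] [Module R M] [Finite ι] {v w : ι → M}
    (h : span R (Set.range v) = span R (Set.range w)) :
    LinearIndependent R v ↔ LinearIndependent R w := by
  cases nonempty_fintype ι
  nontriviality R
  rw [linearIndependent_iff_card_eq_finrank_span, linearIndependent_iff_card_eq_finrank_span,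
    Set.finrank, Set.finrank, h]

theorem linearIndependent_X_mul_X (R : Type*) {σ : Type*} [CommSemiring R] [PartialOrder σ] :
    LinearIndependent R
      fun q : {q : σ × σ // q.1 ≤ q.2} => (X q.1.1 * X q.1.2 : MvPolynomial σ R) := by
  have exponent_injective : Function.Injective fun q : {q : σ × σ // q.1 ≤ q.2} =>
      Finsupp.single q.1.1 1 + Finsupp.single q.1.2 1 := by
    rintro ⟨⟨i, j⟩, hij⟩ ⟨⟨k, l⟩, hkl⟩ h
    simp only [Finsupp.single_add_single_eq_single_add_single one_ne_zero one_ne_zero] at h hij hkl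
    obtain ⟨rfl, rfl⟩ | ⟨-, rfl, rfl⟩ | ⟨two_eq_zero, -⟩ := h
    · rfl
    · obtain rfl := le_antisymm hij hkl
      rfl
    · simp at two_eq_zero
  simpa [Function.comp_def, X, monomial_mul] using
    (basisMonomials σ R).linearIndependent.comp _ exponent_injective

theorem span_range_mul_eq_span_range_sq {R A σ : Type*} [CommSemiring R] [CommSemiring A]
    [Algebra R A] [LinearOrder σ] (x : σ → A) :
    span R (Set.range fun q : {q : σ × σ // q.1 ≤ q.2} => x q.1.1 * x q.1.2) =
      span R (Set.range x) ^ 2 := by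
  rw [pow_two, span_mul_span]
  congr 1
  apply Set.Subset.antisymm
  · rintro _ ⟨q, rfl⟩
    exact Set.mul_mem_mul (Set.mem_range_self _) (Set.mem_range_self _)
  · rintro _ ⟨_, ⟨i, rfl⟩, _, ⟨j, rfl⟩, rfl⟩
    rcases le_total i j with h | h
    · exact ⟨⟨(i, j), h⟩, rfl⟩
    · exact ⟨⟨(j, i), h⟩, mul_comm _ _⟩

section ShiftMatrix

variable {A : Type*} {n : ℕ}

@[simp]
theorem shiftMatrix_zero_castSucc [Zero A] (x : Fin n → A) (j : Fin n) :
    shiftMatrix x 0 j.castSucc = x j := by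
  simp [shiftMatrix]

@[simp]
theorem shiftMatrix_zero_last [Zero A] (x : Fin n → A) : shiftMatrix x 0 (Fin.last n) = 0 := by
  simp [shiftMatrix]

@[simp]
theorem shiftMatrix_one_zero [Zero A] (x : Fin n → A) : shiftMatrix x 1 0 = 0 := by
  simp [shiftMatrix]

@[simp]
theorem shiftMatrix_one_succ [Zero A] (x : Fin n → A) (j : Fin n) :
    shiftMatrix x 1 j.succ = x j := by
  simp [shiftMatrix]

theorem shiftMatrix_mem_span_range {R : Type*} [Semiring R] [AddCommMonoid A] [Module R A]
    (x : Fin n → A) (r : Fin 2) (j : Fin (n + 1)) :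
    shiftMatrix x r j ∈ span R (Set.range x) := by
  match r with
  | 0 =>
    induction j using Fin.lastCases with
    | last => simp
    | cast j => simpa using subset_span (Set.mem_range_self j)
  | 1 =>
    induction j using Fin.cases with
    | zero => simp
    | succ j => simpa using subset_span (Set.mem_range_self j)

end ShiftMatrix

section ShiftMinor

variable {A : Type*} [CommRing A] {n : ℕ}

theorem shiftMinor_apply (x : Fin n → A) (p : {p : Fin (n + 1) × Fin (n + 1) // p.1 < p.2}) :
    shiftMinor x p =
      shiftMatrix x 0 p.1.1 * shiftMatrix x 1 p.1.2 -
        shiftMatrix x 0 p.1.2 * shiftMatrix x 1 p.1.1 := by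
  simp [shiftMinor, Matrix.det_fin_two]

theorem shiftMinor_lePairEquivLTPair (x : Fin n → A) (q : {q : Fin n × Fin n // q.1 ≤ q.2}) :
    shiftMinor x (lePairEquivLTPair n q) =
      x q.1.1 * x q.1.2 - shiftMatrix x 0 q.1.2.succ * shiftMatrix x 1 q.1.1.castSucc := by
  simp [shiftMinor_apply, lePairEquivLTPair]

variable {R : Type*}

theorem shiftMinor_mem_span_range_sq [CommRing R] [Algebra R A] (x : Fin n → A)
    (p : {p : Fin (n + 1) × Fin (n + 1) // p.1 < p.2}) :
    shiftMinor x p ∈ span R (Set.range x) ^ 2 := by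
  rw [shiftMinor_apply, pow_two]
  exact sub_mem
    (mul_mem_mul (shiftMatrix_mem_span_range x _ _) (shiftMatrix_mem_span_range x _ _))
    (mul_mem_mul (shiftMatrix_mem_span_range x _ _) (shiftMatrix_mem_span_range x _ _))

theorem mul_mem_span_range_shiftMinor [CommSemiring R] [Algebra R A] (x : Fin n → A)
    {i j : Fin n} (hij : i ≤ j) :
    x i * x j ∈ span R (Set.range (shiftMinor x)) := by
  obtain _ | n := n
  · exact i.elim0
  induction i using Fin.induction generalizing j with
  | zero =>
    have mul_eq : x 0 * x j = shiftMinor x (lePairEquivLTPair (n + 1) ⟨(0, j), hij⟩) := by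
      simp [shiftMinor_lePairEquivLTPair]
    rw [mul_eq]
    exact subset_span (Set.mem_range_self _)
  | succ i ih =>
    have mul_eq : x i.succ * x j = shiftMinor x (lePairEquivLTPair (n + 1) ⟨(i.succ, j), hij⟩) +
        shiftMatrix x 0 j.succ * x i.castSucc := by
      rw [shiftMinor_lePairEquivLTPair, ← Fin.succ_castSucc, shiftMatrix_one_succ, sub_add_cancel]
    rw [mul_eq]
    refine add_mem (subset_span (Set.mem_range_self _)) ?_
    induction j using Fin.lastCases with
    | last => simp
    | cast j =>
      rw [Fin.succ_castSucc, shiftMatrix_zero_castSucc, mul_comm]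
      exact ih (i.castSucc_lt_succ.le.trans (hij.trans j.castSucc_lt_succ.le))

theorem span_range_shiftMinor [CommRing R] [Algebra R A] (x : Fin n → A) :
    span R (Set.range (shiftMinor x)) = span R (Set.range x) ^ 2 := by
  apply le_antisymm
  · rw [span_le]
    rintro _ ⟨p, rfl⟩
    exact shiftMinor_mem_span_range_sq x p
  · rw [← span_range_mul_eq_span_range_sq, span_le]
    rintro _ ⟨q, rfl⟩
    exact mul_mem_span_range_shiftMinor x q.2

theorem linearIndependent_shiftMinor_iff [CommRing R] [Algebra R A] (x : Fin n → A) :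
    LinearIndependent R (shiftMinor x) ↔
      LinearIndependent R fun q : {q : Fin n × Fin n // q.1 ≤ q.2} => x q.1.1 * x q.1.2 := by
  rw [← linearIndependent_equiv (lePairEquivLTPair n)]
  apply linearIndependent_iff_of_span_range_eq
  rw [EquivLike.range_comp, span_range_shiftMinor, span_range_mul_eq_span_range_sq]

end ShiftMinor

theorem minors_form_basis_of_quadrics_general (R : Type*) [CommRing R] (n : ℕ) :
    LinearIndependent R (shiftMinor (X : Fin n → MvPolynomial (Fin n) R)) ∧
      span R (Set.range (shiftMinor (X : Fin n → MvPolynomial (Fin n) R))) =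
        homogeneousSubmodule (Fin n) R 2 := by
  constructor
  · exact (linearIndependent_shiftMinor_iff X).2 (linearIndependent_X_mul_X R)
  · rw [span_range_shiftMinor, ← homogeneousSubmodule_one_eq_span_X, homogeneousSubmodule_one_pow]

section Rows

variable (k : Type*) [Field k] (n : ℕ)

theorem rowA_eq_shiftMatrix : rowA k n = shiftMatrix X 0 := by
  ext1 j
  induction j using Fin.lastCases <;> simp [rowA, Fin.is_le]

theorem rowB_eq_shiftMatrix : rowB k n = shiftMatrix X 1 := by
  ext1 j
  induction j using Fin.cases <;> simp [rowB]

theorem minor_eq_shiftMinor : minor k n = shiftMinor X := by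
  ext1 p
  rw [shiftMinor_apply, minor, rowA_eq_shiftMatrix, rowB_eq_shiftMatrix]

end Rows

/-- The `(n+2 choose 2)` minors `m_{ij} = a_i·b_j − a_j·b_i`, `0 ≤ i < j ≤ n+1`, of the
matrix `[[X_0, …, X_n, 0], [0, X_0, …, X_n]]` form a basis of the space of homogeneous
polynomials of degree 2 in `X_0, …, X_n`: they are linearly independent and span it. -/
theorem minors_form_basis_of_quadrics (k : Type*) [Field k] (n : ℕ) :
    LinearIndependent k (minor k n) ∧
      Submodule.span k (Set.range (minor k n)) =
        MvPolynomial.homogeneousSubmodule (Fin (n + 1)) k 2 := by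
  rw [minor_eq_shiftMinor]
  exact minors_form_basis_of_quadrics_general k (n + 1)
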